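/- Let k ≥ 1, p ∈ (0,1], d ∈ [0,1], δ ≥ 0, and set ε = max{0, ln(1 + (2/p)^k · ((1−p^k)d − δ))}. For all density matrices ρ and σ on the k-qubit space (matrices indexed by Fin k → Fin 2) that are d-close in trace distance, and for every measurement effect M on that space, Re Tr(M · E_loc(ρ)) ≤ exp(ε) · Re Tr(M · E_loc(σ)) + δ, where E_loc is the local (k-fold tensor product) depolarizing channel with parameter p. In other words, the local depolarizing mechanism on k qubits provides (ε, δ)-quantum differential privacy with this ε. -/

import Mathlib

/-!
Write `q = p / 4`. Since `q ≤ 1 - 3 * p / 4`, every Pauli weight is at least `q`, so the channel splits as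

  `E_loc(ρ) = ∑ f, (w_f - q ^ k) K_f ρ K_fᴴ + q ^ k ∑ f, K_f ρ K_fᴴ`

with nonnegative coefficients `w_f - q ^ k` of total mass `1 - p ^ k`. By the Pauli twirl
(`sum_pauliTensor_conj`) the second part is the constant `(p / 2) ^ k • 1` on states. This gives, for
an effect `M` with trace `t`,

* `Re Tr(M (E_loc ρ - E_loc σ)) ≤ (1 - p ^ k) min(1, t) d`: the constant parts cancel, each
  `K_fᴴ M K_f` is again an effect of trace `t`, and dividing an effect of trace `t > 0` by `t` leaves
  an effect when `t ≤ 1` (`IsEffect.re_trace_mul_sub_le`);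
* `Re Tr(M E_loc σ) ≥ (p / 2) ^ k t`: the first part contributes a nonnegative amount.

The two bounds combine to the claim because, for `A = (1 - p ^ k) d - δ ≥ 0`,
`min(1, t) (1 - p ^ k) d ≤ A t + δ`, while `exp ε ≥ 1 + (2 / p) ^ k A`. If `A ≤ 0`, the first bound is
already at most `δ`, and `exp ε ≥ 1` suffices.
-/

open Matrix Complex ComplexOrder

/-- A density matrix: positive semidefinite with trace 1. -/
def IsDensityMatrix {n : Type*} [Fintype n] [DecidableEq n]
    (ρ : Matrix n n ℂ) : Prop :=
  ρ.PosSemidef ∧ ρ.trace = 1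

/-- A measurement effect: both `M` and `1 - M` are positive semidefinite. -/
def IsEffect {n : Type*} [Fintype n] [DecidableEq n]
    (M : Matrix n n ℂ) : Prop :=
  M.PosSemidef ∧ (1 - M).PosSemidef

/-- Variational characterization of trace distance at most `d`. -/
def TraceClose {n : Type*} [Fintype n] [DecidableEq n] (d : ℝ)
    (ρ σ : Matrix n n ℂ) : Prop :=
  ∀ M : Matrix n n ℂ, IsEffect M → ((M * (ρ - σ)).trace).re ≤ d

/-- The single-qubit Pauli matrices `I, X, Y, Z`. -/
def pauli : Fin 4 → Matrix (Fin 2) (Fin 2) ℂ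
  | 0 => 1
  | 1 => !![0, 1; 1, 0]
  | 2 => !![0, -Complex.I; Complex.I, 0]
  | 3 => !![1, 0; 0, -1]

/-- The weights of the single-qubit depolarizing channel with parameter `p`. -/
noncomputable def depWeight (p : ℝ) : Fin 4 → ℝ
  | 0 => 1 - 3 * p / 4
  | _ => p / 4

/-- The `k`-fold tensor product of Pauli matrices selected by `f`. -/
def pauliTensor {k : ℕ} (f : Fin k → Fin 4) :
    Matrix (Fin k → Fin 2) (Fin k → Fin 2) ℂ :=
  fun x y => ∏ i, pauli (f i) (x i) (y i)

/-- The local (k-fold tensor product) depolarizing channel with parameter `p`. -/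
noncomputable def localDepolarizing {k : ℕ} (p : ℝ)
    (ρ : Matrix (Fin k → Fin 2) (Fin k → Fin 2) ℂ) :
    Matrix (Fin k → Fin 2) (Fin k → Fin 2) ℂ :=
  ∑ f : Fin k → Fin 4,
    (∏ i, depWeight p (f i)) • (pauliTensor f * ρ * (pauliTensor f)ᴴ)

theorem Matrix.PosSemidef.re_trace_mul_nonneg {n : Type*} [Fintype n] [DecidableEq n]
    {A B : Matrix n n ℂ} (hA : A.PosSemidef) (hB : B.PosSemidef) : 0 ≤ ((A * B).trace).re := by
  obtain ⟨C, rfl⟩ : ∃ C : Matrix n n ℂ, A = Cᴴ * C := by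
    open scoped MatrixOrder in
    exact CStarAlgebra.nonneg_iff_eq_star_mul_self.mp hA.nonneg
  have h := (hB.mul_mul_conjTranspose_same C).trace_nonneg
  rw [Matrix.mul_assoc, Matrix.trace_mul_comm]
  exact (Complex.nonneg_iff.mp h).1

theorem Matrix.PosSemidef.ofReal_re_trace {n : Type*} [Fintype n]
    {A : Matrix n n ℂ} (hA : A.PosSemidef) : ((A.trace.re : ℝ) : ℂ) = A.trace :=
  Complex.ext rfl (by simpa using (Complex.nonneg_iff.mp hA.trace_nonneg).2)

/-- Every eigenvalue of a positive semidefinite matrix is at most the trace. -/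
theorem Matrix.PosSemidef.trace_smul_one_sub {n : Type*} [Fintype n] [DecidableEq n]
    {A : Matrix n n ℂ} (hA : A.PosSemidef) : (A.trace • (1 : Matrix n n ℂ) - A).PosSemidef := by
  set U := hA.1.eigenvectorUnitary
  have hs := hA.1.spectral_theorem
  rw [Unitary.conjStarAlgAut_apply] at hs
  have hU : (U : Matrix n n ℂ) * star (U : Matrix n n ℂ) = 1 := Unitary.coe_mul_star_self U
  have key : A.trace • (1 : Matrix n n ℂ) - A =
      (U : Matrix n n ℂ) * diagonal (fun i => A.trace - (hA.1.eigenvalues i : ℂ)) *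
        (U : Matrix n n ℂ)ᴴ := by
    have hd : diagonal (fun i => A.trace - (hA.1.eigenvalues i : ℂ)) =
        A.trace • (1 : Matrix n n ℂ) - diagonal (RCLike.ofReal ∘ hA.1.eigenvalues) := by
      rw [← diagonal_one, ← diagonal_smul, diagonal_sub]
      congr 1
      ext i
      simp
    rw [hd, Matrix.mul_sub, Matrix.sub_mul, ← star_eq_conjTranspose, ← hs, Matrix.mul_smul,
      Matrix.smul_mul, Matrix.mul_one, hU]
  rw [key]
  refine (PosSemidef.diagonal fun i => ?_).mul_mul_conjTranspose_same _
  have h1 : hA.1.eigenvalues i ≤ ∑ j, hA.1.eigenvalues j :=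
    Finset.single_le_sum (fun j _ => hA.eigenvalues_nonneg j) (Finset.mem_univ i)
  have h2 : A.trace = ((∑ j, hA.1.eigenvalues j : ℝ) : ℂ) := by
    rw [hA.1.trace_eq_sum_eigenvalues]; simp
  rw [h2, Pi.zero_apply, sub_nonneg]
  exact Complex.real_le_real.mpr h1

/-- Trace closeness, tested on effects of small trace, yields a proportionally smaller bound. -/
theorem IsEffect.re_trace_mul_sub_le {n : Type*} [Fintype n] [DecidableEq n] {d : ℝ}
    {ρ σ M : Matrix n n ℂ} (hM : IsEffect M) (h : TraceClose d ρ σ) :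
    ((M * (ρ - σ)).trace).re ≤ min 1 M.trace.re * d := by
  rcases le_total 1 M.trace.re with ht | ht
  · rw [min_eq_left ht, one_mul]; exact h M hM
  rw [min_eq_right ht]
  have ht0 : 0 ≤ M.trace.re := (Complex.nonneg_iff.mp hM.1.trace_nonneg).1
  rcases ht0.eq_or_lt with h0 | hpos
  · have hz : M = 0 := by
      rw [← hM.1.trace_eq_zero_iff, ← hM.1.ofReal_re_trace, ← h0]; simp
    simp [hz]
  have hinv : (0 : ℂ) ≤ ((M.trace.re⁻¹ : ℝ) : ℂ) := by exact_mod_cast (inv_pos.mpr hpos).le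
  have hN : IsEffect (((M.trace.re⁻¹ : ℝ) : ℂ) • M) := by
    refine ⟨hM.1.smul hinv, ?_⟩
    have h1 := hM.1.trace_smul_one_sub.smul hinv
    have hc : ((M.trace.re⁻¹ : ℝ) : ℂ) * M.trace = 1 := by
      rw [← hM.1.ofReal_re_trace, Complex.ofReal_re]
      exact_mod_cast inv_mul_cancel₀ hpos.ne'
    rwa [smul_sub, smul_smul, hc, one_smul] at h1
  have h2 := h _ hN
  rw [smul_mul, trace_smul, smul_eq_mul, Complex.re_ofReal_mul, inv_mul_le_iff₀ hpos] at h2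
  exact h2

/-- Tensor products of Pauli matrices are unitary. -/
theorem pauliTensor_conjTranspose_mul_self {k : ℕ} (f : Fin k → Fin 4) :
    (pauliTensor f)ᴴ * pauliTensor f = 1 := by
  have h1 : ∀ (a : Fin 4) (x y : Fin 2),
      ∑ z, star (pauli a z x) * pauli a z y = if x = y then 1 else 0 := by
    intro a x y
    fin_cases a <;> fin_cases x <;> fin_cases y <;> simp [pauli, one_apply]
  ext x y
  simp only [mul_apply, conjTranspose_apply, pauliTensor, star_prod, ← Finset.prod_mul_distrib]
  rw [← Fintype.prod_sum (fun i z => star (pauli (f i) z (x i)) * pauli (f i) z (y i))]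
  simp only [h1, one_apply, Finset.prod_ite_zero, Finset.prod_const_one, Finset.mem_univ,
    true_imp_iff, funext_iff]

/-- The Pauli twirl: summing over all Pauli conjugations gives a multiple of the identity. -/
theorem sum_pauliTensor_conj {k : ℕ} (ρ : Matrix (Fin k → Fin 2) (Fin k → Fin 2) ℂ) :
    ∑ f : Fin k → Fin 4, pauliTensor f * ρ * (pauliTensor f)ᴴ = (2 ^ k * ρ.trace) • 1 := by
  have h1 : ∀ x y a b : Fin 2,
      ∑ c, pauli c x a * star (pauli c y b) = if x = y ∧ a = b then 2 else 0 := by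
    intro x y a b
    fin_cases x <;> fin_cases y <;> fin_cases a <;> fin_cases b <;>
      simp [pauli, Fin.sum_univ_four] <;> norm_num
  have h2 : ∀ x y a b : Fin k → Fin 2,
      ∑ f : Fin k → Fin 4, pauliTensor f x a * star (pauliTensor f y b) =
        if x = y ∧ a = b then 2 ^ k else 0 := by
    intro x y a b
    simp only [pauliTensor, star_prod, ← Finset.prod_mul_distrib]
    rw [← Fintype.prod_sum (fun i c => pauli c (x i) (a i) * star (pauli c (y i) (b i)))]
    simp only [h1, Finset.prod_ite_zero, Finset.prod_const, Finset.mem_univ, true_imp_iff,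
      forall_and, funext_iff, Finset.card_univ, Fintype.card_fin]
  ext x y
  calc (∑ f : Fin k → Fin 4, pauliTensor f * ρ * (pauliTensor f)ᴴ) x y
      = ∑ f : Fin k → Fin 4, ∑ b, ∑ a,
          ρ a b * (pauliTensor f x a * star (pauliTensor f y b)) := by
        simp only [Matrix.sum_apply, mul_apply, conjTranspose_apply, Finset.sum_mul]
        refine Finset.sum_congr rfl fun f _ => Finset.sum_congr rfl fun b _ =>
          Finset.sum_congr rfl fun a _ => by ring
    _ = ∑ b, ∑ a, ρ a b * ∑ f : Fin k → Fin 4, pauliTensor f x a * star (pauliTensor f y b) := by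
        rw [Finset.sum_comm]
        refine Finset.sum_congr rfl fun b _ => ?_
        rw [Finset.sum_comm]
        simp only [Finset.mul_sum]
    _ = ((2 ^ k * ρ.trace) • (1 : Matrix (Fin k → Fin 2) (Fin k → Fin 2) ℂ)) x y := by
        simp only [h2]
        by_cases hxy : x = y
        · simp [hxy, trace, Finset.mul_sum, mul_comm]
        · simp [hxy]

/-- Conjugation by a Pauli tensor, in the Heisenberg picture, preserves effects. -/
theorem IsEffect.pauli_conj {k : ℕ} {M : Matrix (Fin k → Fin 2) (Fin k → Fin 2) ℂ}
    (hM : IsEffect M) (f : Fin k → Fin 4) :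
    IsEffect ((pauliTensor f)ᴴ * M * pauliTensor f) := by
  refine ⟨hM.1.conjTranspose_mul_mul_same _, ?_⟩
  have h := hM.2.conjTranspose_mul_mul_same (pauliTensor f)
  rwa [Matrix.mul_sub, Matrix.sub_mul, Matrix.mul_one, pauliTensor_conjTranspose_mul_self] at h

theorem trace_pauli_conj {k : ℕ} (M : Matrix (Fin k → Fin 2) (Fin k → Fin 2) ℂ)
    (f : Fin k → Fin 4) : ((pauliTensor f)ᴴ * M * pauliTensor f).trace = M.trace := by
  rw [Matrix.trace_mul_comm, ← Matrix.mul_assoc,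
    mul_eq_one_comm.mp (pauliTensor_conjTranspose_mul_self f), Matrix.one_mul]

theorem pow_le_prod_depWeight {k : ℕ} {p : ℝ} (hp0 : 0 < p) (hp1 : p ≤ 1) (f : Fin k → Fin 4) :
    (p / 4) ^ k ≤ ∏ i, depWeight p (f i) := by
  have h : ∀ a, p / 4 ≤ depWeight p a := by
    intro a
    fin_cases a <;> simp [depWeight]
    linarith
  calc (p / 4) ^ k = ∏ _i : Fin k, p / 4 := by rw [Finset.prod_const, Finset.card_univ, Fintype.card_fin]
    _ ≤ _ := Finset.prod_le_prod (fun _ _ => by positivity) (fun i _ => h _)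

theorem sum_prod_depWeight_sub {k : ℕ} (p : ℝ) :
    ∑ f : Fin k → Fin 4, (∏ i, depWeight p (f i) - (p / 4) ^ k) = 1 - p ^ k := by
  rw [Finset.sum_sub_distrib, ← Fintype.prod_sum (fun (_ : Fin k) a => depWeight p a)]
  have h : ∑ a, depWeight p a = 1 := by
    simp [depWeight, Fin.sum_univ_four]; ring
  simp only [h, Finset.prod_const_one, Finset.sum_const, Finset.card_univ, Fintype.card_fun,
    Fintype.card_fin, nsmul_eq_mul]
  push_cast
  rw [← mul_pow]
  congr 2
  ring

/-- The splitting of the channel into a Pauli mixture of mass `1 - p ^ k` and a completely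
depolarizing part, tested against `M` in the Heisenberg picture. -/
theorem re_trace_mul_localDepolarizing {k : ℕ} (p : ℝ)
    (M ρ : Matrix (Fin k → Fin 2) (Fin k → Fin 2) ℂ) (hρ : ρ.trace = 1) :
    ((M * localDepolarizing p ρ).trace).re =
      ∑ f : Fin k → Fin 4, (∏ i, depWeight p (f i) - (p / 4) ^ k) *
        (((pauliTensor f)ᴴ * M * pauliTensor f * ρ).trace).re + (p / 2) ^ k * M.trace.re := by
  have h1 : localDepolarizing p ρ =
      ∑ f : Fin k → Fin 4, (∏ i, depWeight p (f i) - (p / 4) ^ k) •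
        (pauliTensor f * ρ * (pauliTensor f)ᴴ) +
      ((p / 2) ^ k : ℝ) • (1 : Matrix (Fin k → Fin 2) (Fin k → Fin 2) ℂ) := by
    have h2 : ((p / 2) ^ k : ℝ) • (1 : Matrix (Fin k → Fin 2) (Fin k → Fin 2) ℂ) =
        ((p / 4) ^ k : ℝ) • ∑ f : Fin k → Fin 4, pauliTensor f * ρ * (pauliTensor f)ᴴ := by
      rw [sum_pauliTensor_conj, hρ, mul_one,
        show (2 : ℂ) ^ k = ((2 ^ k : ℝ) : ℂ) by push_cast; rfl, Complex.coe_smul, smul_smul,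
        ← mul_pow]
      congr 2
      ring
    rw [h2, Finset.smul_sum, ← Finset.sum_add_distrib, localDepolarizing]
    refine Finset.sum_congr rfl fun f _ => ?_
    rw [← add_smul, sub_add_cancel]
  rw [h1, Matrix.mul_add, trace_add, Complex.add_re, Matrix.mul_sum, trace_sum, Complex.re_sum]
  congr 1
  · refine Finset.sum_congr rfl fun f _ => ?_
    rw [Matrix.mul_smul, trace_smul, Complex.smul_re, smul_eq_mul, ← Matrix.mul_assoc,
      Matrix.trace_mul_comm]
    simp only [Matrix.mul_assoc]
  · rw [Matrix.mul_smul, trace_smul, Complex.smul_re, smul_eq_mul, Matrix.mul_one]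


/-- The local depolarizing mechanism on `k` qubits provides `(ε, δ)`-QDP with
`ε = max {0, ln (1 + (2/p)^k ((1 - p^k) d - δ))}`. -/
theorem local_depolarizing_mechanism_epsDelta_QDP
    {k : ℕ} (hk : 1 ≤ k) {p d δ : ℝ} (hp0 : 0 < p) (hp1 : p ≤ 1)
    (hd0 : 0 ≤ d) (hd1 : d ≤ 1) (hδ : 0 ≤ δ)
    (ρ σ : Matrix (Fin k → Fin 2) (Fin k → Fin 2) ℂ)
    (hρ : IsDensityMatrix ρ) (hσ : IsDensityMatrix σ)
    (hclose : TraceClose d ρ σ)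
    (M : Matrix (Fin k → Fin 2) (Fin k → Fin 2) ℂ) (hM : IsEffect M) :
    ((M * localDepolarizing p ρ).trace).re ≤
      Real.exp (max 0 (Real.log (1 + (2 / p) ^ k * ((1 - p ^ k) * d - δ)))) *
        ((M * localDepolarizing p σ).trace).re + δ := by
  set t := M.trace.re
  have ht : 0 ≤ t := (Complex.nonneg_iff.mp hM.1.trace_nonneg).1
  have hpk : p ^ k ≤ 1 := pow_le_one₀ hp0.le hp1
  have hw : ∀ f : Fin k → Fin 4, 0 ≤ ∏ i, depWeight p (f i) - (p / 4) ^ k := fun f =>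
    sub_nonneg.mpr (pow_le_prod_depWeight hp0 hp1 f)
  have hdiff : ((M * localDepolarizing p ρ).trace).re - ((M * localDepolarizing p σ).trace).re ≤
      (1 - p ^ k) * (min 1 t * d) := by
    rw [re_trace_mul_localDepolarizing p M ρ hρ.2, re_trace_mul_localDepolarizing p M σ hσ.2,
      add_sub_add_right_eq_sub, ← Finset.sum_sub_distrib, ← sum_prod_depWeight_sub, Finset.sum_mul]
    refine Finset.sum_le_sum fun f _ => ?_
    rw [← mul_sub, ← Complex.sub_re, ← trace_sub, ← Matrix.mul_sub]
    have h := (hM.pauli_conj f).re_trace_mul_sub_le hclose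
    rw [trace_pauli_conj] at h
    exact mul_le_mul_of_nonneg_left h (hw f)
  have hlow : (p / 2) ^ k * t ≤ ((M * localDepolarizing p σ).trace).re := by
    rw [re_trace_mul_localDepolarizing p M σ hσ.2]
    exact le_add_of_nonneg_left (Finset.sum_nonneg fun f _ =>
      mul_nonneg (hw f) ((hM.pauli_conj f).1.re_trace_mul_nonneg hσ.1))
  set s := ((M * localDepolarizing p σ).trace).re
  set r := ((M * localDepolarizing p ρ).trace).re
  set A := (1 - p ^ k) * d - δ with hA
  have hs : 0 ≤ s := le_trans (by positivity) hlow
  set e := Real.exp (max 0 (Real.log (1 + (2 / p) ^ k * A)))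
  have he1 : 1 ≤ e := Real.one_le_exp (le_max_left _ _)
  have hmd : (1 - p ^ k) * (min 1 t * d) = min 1 t * (A + δ) := by rw [hA]; ring
  rw [hmd] at hdiff
  have hm0 : 0 ≤ min 1 t := le_min zero_le_one ht
  have hm1 : min 1 t ≤ 1 := min_le_left _ _
  have hmt : min 1 t ≤ t := min_le_right _ _
  rcases le_total A 0 with hA0 | hA0
  · nlinarith [mul_nonneg (sub_nonneg.mpr he1) hs, mul_nonneg hm0 (neg_nonneg.mpr hA0),
      mul_nonneg (sub_nonneg.mpr hm1) hδ]
  · have hpos : 0 < 1 + (2 / p) ^ k * A := by positivity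
    have he : 1 + (2 / p) ^ k * A ≤ e := by
      rw [← Real.exp_log hpos]
      exact Real.exp_le_exp.mpr (le_max_right _ _)
    have hcancel : (2 / p) ^ k * (p / 2) ^ k = 1 := by
      rw [← mul_pow, div_mul_div_comm, mul_comm 2 p, div_self (by positivity), one_pow]
    have hAt : A * t ≤ (2 / p) ^ k * A * s := by
      calc A * t = (2 / p) ^ k * A * ((p / 2) ^ k * t) := by linear_combination (-A * t) * hcancel
        _ ≤ _ := mul_le_mul_of_nonneg_left hlow (by positivity)
    nlinarith [mul_le_mul_of_nonneg_right he hs, mul_nonneg hA0 (sub_nonneg.mpr hmt),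
      mul_nonneg (sub_nonneg.mpr hm1) hδ]
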